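/- arXiv:1801.10298 — 2 statements merged into one kernel-verified Lean document; each statement's English description precedes it below -/
import Mathlib

section
/- Let h₁ be a harmonic polynomial on ℝ^p homogeneous of degree k, h₂ a harmonic polynomial on ℝ^q homogeneous of degree l, set κ₊ = k + p/2, κ₋ = l + q/2, assume κ₊ ≠ 1, κ₋ ≠ 1, let a, b ∈ ℕ and α ∈ ℂ with α ∉ {1, 0, −1, −2, …}, and define (x_i h₁)† := x_i h₁ − (ρ_x/(κ₊−1))·∂_{x_i}h₁ and (y_j h₂)† := y_j h₂ − (ρ_y/(κ₋−1))·∂_{y_j}h₂. Then for all 1 ≤ i ≤ p and 1 ≤ j ≤ q, at every point with x ≠ 0 and y ≠ 0: (∂_{x_i}∂_{y_j} + x_i y_j)( h₁ h₂ ρ_x^a ρ_y^b ψ_α ) = (∂_{x_i}h₁)(∂_{y_j}h₂)·ρ_x^a ρ_y^b·( ((κ₊+a−α)(κ₋+b−α)/((κ₊−1)(κ₋−1)))·ψ_α + ((α−1)(κ₊+κ₋+a+b−α−1)/((κ₊−1)(κ₋−1)))·ψ_{α−1} ) + (∂_{x_i}h₁)·(y_j h₂)†·( −((κ₊+a+b−α)/(α(κ₊−1)))·ρ_x^{a+1}ρ_y^b·ψ_{α+1}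 + (b(κ₊+a−1)/(κ₊−1))·ρ_x^a ρ_y^{b−1}·ψ_α ) + (x_i h₁)†·(∂_{y_j}h₂)·( −((κ₋+a+b−α)/(α(κ₋−1)))·ρ_x^a ρ_y^{b+1}·ψ_{α+1} + (a(κ₋+b−1)/(κ₋−1))·ρ_x^{a−1}ρ_y^b·ψ_α ) + (x_i h₁)†·(y_j h₂)†·( −((a+b+1−α)/α)·ρ_x^a ρ_y^b·ψ_{α+1} + ab·ρ_x^{a−1}ρ_y^{b−1}·ψ_α ). -/
noncomputable section

/-- Points `(x, y) ∈ ℝ^p × ℝ^q`. -/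
abbrev Pt (p q : ℕ) := (Fin p → ℝ) × (Fin q → ℝ)

/-- The partial derivative `∂_{x_i}` of a function on `ℝ^p × ℝ^q`. -/
def pdx (p q : ℕ) (i : Fin p) (f : Pt p q → ℂ) : Pt p q → ℂ :=
  fun z => fderiv ℝ f z ((Pi.single i 1 : Fin p → ℝ), (0 : Fin q → ℝ))

/-- The partial derivative `∂_{y_j}` of a function on `ℝ^p × ℝ^q`. -/
def pdy (p q : ℕ) (j : Fin q) (f : Pt p q → ℂ) : Pt p q → ℂ :=
  fun z => fderiv ℝ f z ((0 : Fin p → ℝ), (Pi.single j 1 : Fin q → ℝ))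

/-- `ρ_x = r_x²/2 = (Σ_i x_i²)/2`. -/
def rhox (p q : ℕ) (z : Pt p q) : ℝ := (∑ i, z.1 i ^ 2) / 2

/-- `ρ_y = r_y²/2 = (Σ_j y_j²)/2`. -/
def rhoy (p q : ℕ) (z : Pt p q) : ℝ := (∑ j, z.2 j ^ 2) / 2

/-- The operator `H = −E_x − p/2 + E_y + q/2`. -/
def HOp (p q : ℕ) (f : Pt p q → ℂ) : Pt p q → ℂ := fun z =>
  -(∑ i, ((z.1 i : ℝ) : ℂ) * pdx p q i f z) - ((p : ℂ) / 2) * f z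
    + (∑ j, ((z.2 j : ℝ) : ℂ) * pdy p q j f z) + ((q : ℂ) / 2) * f z

/-- The operator `X⁺ = −(1/2)(Δ_x + r_y²)`. -/
def XpOp (p q : ℕ) (f : Pt p q → ℂ) : Pt p q → ℂ := fun z =>
  -(1 / 2 : ℂ) * ((∑ i, pdx p q i (pdx p q i f) z) + (((∑ j, z.2 j ^ 2 : ℝ)) : ℂ) * f z)

/-- The operator `X⁻ = (1/2)(r_x² + Δ_y)`. -/
def XmOp (p q : ℕ) (f : Pt p q → ℂ) : Pt p q → ℂ := fun z =>
  (1 / 2 : ℂ) * ((((∑ i, z.1 i ^ 2 : ℝ)) : ℂ) * f z + ∑ j, pdy p q j (pdy p q j f) z)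

/-- Rising factorial `(α)ₙ = α(α+1)⋯(α+n−1)` for a complex number `α`. -/
def rising (α : ℂ) : ℕ → ℂ
  | 0 => 1
  | n + 1 => rising α n * (α + n)

/-- Falling factorial `⟨β⟩ₙ = β(β−1)⋯(β−n+1)` for a complex number `β`. -/
def falling (β : ℂ) : ℕ → ℂ
  | 0 => 1
  | n + 1 => falling β n * (β - n)

/-- `Ψ_α(u) = Σ_{n=0}^∞ ((−1)ⁿ/(n!·(α)ₙ))·uⁿ`. -/
def Psi (α : ℂ) (u : ℂ) : ℂ :=
  ∑' n : ℕ, ((-1) ^ n / ((n.factorial : ℂ) * rising α n)) * u ^ n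

/-- `ψ_α(x,y) = Ψ_α(ρ_x ρ_y)`. -/
def psiF (p q : ℕ) (α : ℂ) (z : Pt p q) : ℂ :=
  Psi α (((rhox p q z * rhoy p q z : ℝ)) : ℂ)

end


/-!
The function `Ψ_α` satisfies `Ψ_α' = -Ψ_{α+1} / α` and the contiguous relation
`u Ψ_{α+2}(u) = α (α + 1) (Ψ_{α+1}(u) - Ψ_α(u))`. For `f = A(x) B(y) ψ_α` the first of these writes
`∂_{x_i} ∂_{y_j} f` in terms of `ψ_α`, `ψ_{α+1}` and `ρ_x ρ_y ψ_{α+2}`. The second replaces the last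
one by `ψ_{α+1}` and a multiple of `ψ_α` which is cancelled exactly by `x_i y_j f`. With
`A = h₁ ρ_x^a` and `B = h₂ ρ_y^b`, substituting `x_i h₁ = (x_i h₁)† + ρ_x / (κ₊ - 1) ∂_{x_i} h₁` and
its analogue for `y_j h₂` gives the four summands of the formula; in the one with
`∂_{x_i} h₁ ∂_{y_j} h₂`, the contiguous relation at `α - 1` trades `ρ_x ρ_y ψ_{α+1}` for `ψ_α` and
`ψ_{α-1}`.
-/

section PowerSeries

theorem hasDerivAt_tsum_mul_pow {𝕜 : Type*} [RCLike 𝕜] {c : ℕ → 𝕜}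
    (hc : ∀ u : 𝕜, Summable fun n : ℕ => (n + 1) * c (n + 1) * u ^ n) (u : 𝕜) :
    HasDerivAt (fun v => ∑' n, c n * v ^ n) (∑' n : ℕ, (n + 1) * c (n + 1) * u ^ n) u := by
  let termDeriv (n : ℕ) (v : 𝕜) : 𝕜 := c n * (n * v ^ (n - 1))
  have termDeriv_succ (n : ℕ) (v : 𝕜) : termDeriv (n + 1) v = (n + 1) * c (n + 1) * v ^ n := by
    simp only [termDeriv, Nat.add_sub_cancel]
    push_cast
    ring
  have summable_termDeriv (v : 𝕜) : Summable fun n => termDeriv n v := by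
    rw [← summable_nat_add_iff 1]
    simpa only [termDeriv_succ] using hc v
  have norm_termDeriv_le (n : ℕ) (v : 𝕜) (hv : v ∈ Metric.ball (0 : 𝕜) (‖u‖ + 1)) :
      ‖termDeriv n v‖ ≤ ‖termDeriv n ((‖u‖ + 1 : ℝ) : 𝕜)‖ := by
    have hv' : ‖v‖ ≤ ‖((‖u‖ + 1 : ℝ) : 𝕜)‖ := by
      rw [RCLike.norm_ofReal]
      exact (mem_ball_zero_iff.1 hv).le.trans (le_abs_self _)
    simp only [termDeriv, norm_mul, norm_pow]
    gcongr
  have summable_at_zero : Summable fun n => c n * (0 : 𝕜) ^ n :=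
    summable_of_ne_finset_zero (s := {0}) fun n hn => by simp_all
  refine (hasDerivAt_tsum_of_isPreconnected (summable_termDeriv _).norm Metric.isOpen_ball
    (convex_ball (0 : 𝕜) (‖u‖ + 1)).isPreconnected
    (fun n v _ => (hasDerivAt_pow n v).const_mul (c n)) norm_termDeriv_le
    (Metric.mem_ball_self (by positivity)) summable_at_zero (by simp)).congr_deriv ?_
  rw [(summable_termDeriv u).tsum_eq_zero_add]
  simp [termDeriv_succ, termDeriv]

end PowerSeries

section Psi

theorem rising_eq_ascPochhammer_eval (α : ℂ) (n : ℕ) :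
    rising α n = (ascPochhammer ℂ n).eval α := by
  induction n with
  | zero => simp [rising]
  | succ n ih => simp [rising, ih, ascPochhammer_succ_eval]

theorem rising_succ_left (α : ℂ) (n : ℕ) : rising α (n + 1) = α * rising (α + 1) n := by
  simp [rising_eq_ascPochhammer_eval, ascPochhammer_succ_left]

/-- The coefficient of `uⁿ` in `Ψ_α(u)`, named so that identities between the functions `Ψ_α` can be
checked coefficientwise. -/
noncomputable def psiCoeff (α : ℂ) (n : ℕ) : ℂ := (-1) ^ n / (n.factorial * rising α n)

theorem Psi_eq_tsum_psiCoeff (α u : ℂ) : Psi α u = ∑' n, psiCoeff α n * u ^ n := rfl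

theorem succ_mul_psiCoeff_succ (α : ℂ) (n : ℕ) :
    (n + 1) * psiCoeff α (n + 1) = -(1 / α) * psiCoeff (α + 1) n := by
  have : (n : ℂ) + 1 ≠ 0 := by exact_mod_cast n.succ_ne_zero
  rw [psiCoeff, psiCoeff, rising_succ_left, Nat.factorial_succ]
  push_cast
  field_simp
  ring

variable {α : ℂ}

theorem add_one_ne_neg_natCast (hα : ∀ n : ℕ, α ≠ -n) (n : ℕ) : α + 1 ≠ -n := fun h =>
  hα (n + 1) (by push_cast; linear_combination h)

theorem sub_one_ne_neg_natCast (hα : ∀ n : ℕ, α ≠ -n) (hα1 : α ≠ 1) (n : ℕ) : α - 1 ≠ -n := by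
  intro h
  cases n with
  | zero => exact hα1 (by simpa [sub_eq_zero] using h)
  | succ n => exact hα n (by push_cast at h; linear_combination h)

theorem psiCoeff_eq_mul_psiCoeff_add_one (hα : ∀ n : ℕ, α ≠ -n) (n : ℕ) :
    psiCoeff α n = (α + n) / α * psiCoeff (α + 1) n := by
  have hα₀ : α ≠ 0 := by simpa using hα 0
  have hαn : α + n ≠ 0 := fun h => hα n (eq_neg_of_add_eq_zero_left h)
  have rising_shift : α * rising (α + 1) n = rising α n * (α + n) := (rising_succ_left α n).symm
  have : rising (α + 1) n = rising α n * (α + n) / α := by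
    rw [← rising_shift, mul_div_cancel_left₀ _ hα₀]
  rw [psiCoeff, psiCoeff, this]
  field_simp

theorem psiCoeff_add_one_succ_sub (hα : ∀ n : ℕ, α ≠ -n) (n : ℕ) :
    α * (α + 1) * (psiCoeff (α + 1) (n + 1) - psiCoeff α (n + 1)) = psiCoeff (α + 1 + 1) n := by
  have hα₀ : α ≠ 0 := by simpa using hα 0
  have hα₁ : α + 1 ≠ 0 := by simpa using add_one_ne_neg_natCast hα 0
  have hn : (n : ℂ) + 1 ≠ 0 := by exact_mod_cast n.succ_ne_zero
  refine mul_left_cancel₀ hn ?_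
  calc (n + 1) * (α * (α + 1) * (psiCoeff (α + 1) (n + 1) - psiCoeff α (n + 1)))
    _ = α * (α + 1) *
        ((n + 1) * psiCoeff (α + 1) (n + 1) - (n + 1) * psiCoeff α (n + 1)) := by ring
    _ = (n + 1) * psiCoeff (α + 1 + 1) n := by
      rw [succ_mul_psiCoeff_succ, succ_mul_psiCoeff_succ,
        psiCoeff_eq_mul_psiCoeff_add_one (add_one_ne_neg_natCast hα)]
      field_simp
      ring

theorem psiCoeff_eq_Gamma_mul_regularizedHGFunCoeff (hα : ∀ n : ℕ, α ≠ -n) (n : ℕ) :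
    psiCoeff α n = Complex.Gamma α * ((-1) ^ n * Complex.regularizedHGFunCoeff 0 {α} n) := by
  have hΓ : Complex.Gamma α ≠ 0 := Complex.Gamma_ne_zero hα
  rw [psiCoeff, rising_eq_ascPochhammer_eval, ← Complex.Gamma_add_nat_div_Gamma_eq α hα]
  simp only [Complex.regularizedHGFunCoeff, Multiset.map_zero, Multiset.prod_zero,
    Multiset.map_singleton, Multiset.prod_singleton]
  field_simp

theorem summable_psiCoeff_mul_pow (hα : ∀ n : ℕ, α ≠ -n) (u : ℂ) :
    Summable fun n => psiCoeff α n * u ^ n := by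
  have hradius : (Complex.regularizedHGFunSeries 0 {α}).radius = ⊤ :=
    Complex.radius_regularizedHGFunSeries_eq_top (by simp)
  have hsum := (Complex.regularizedHGFunSeries 0 {α}).summable (x := -u) (by simp [hradius])
  simp only [Complex.regularizedHGFunSeries, FormalMultilinearSeries.ofScalars_apply_eq,
    smul_eq_mul] at hsum
  refine (hsum.mul_left (Complex.Gamma α)).congr fun n => ?_
  rw [psiCoeff_eq_Gamma_mul_regularizedHGFunCoeff hα, neg_pow u]
  ring

theorem hasDerivAt_Psi (hα : ∀ n : ℕ, α ≠ -n) (u : ℂ) :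
    HasDerivAt (Psi α) (-(1 / α) * Psi (α + 1) u) u := by
  have hderiv (v : ℂ) (n : ℕ) :
      (n + 1) * psiCoeff α (n + 1) * v ^ n = -(1 / α) * (psiCoeff (α + 1) n * v ^ n) := by
    rw [succ_mul_psiCoeff_succ, mul_assoc]
  have hsum (v : ℂ) : Summable fun n : ℕ => (n + 1) * psiCoeff α (n + 1) * v ^ n := by
    simp only [hderiv]
    exact (summable_psiCoeff_mul_pow (add_one_ne_neg_natCast hα) v).mul_left _
  refine (hasDerivAt_tsum_mul_pow hsum u).congr_deriv ?_
  simp only [hderiv, tsum_mul_left, Psi_eq_tsum_psiCoeff]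

theorem mul_Psi_add_two (hα : ∀ n : ℕ, α ≠ -n) (u : ℂ) :
    u * Psi (α + 1 + 1) u = α * (α + 1) * (Psi (α + 1) u - Psi α u) := by
  have hsum := summable_psiCoeff_mul_pow hα u
  have hsum₁ := summable_psiCoeff_mul_pow (add_one_ne_neg_natCast hα) u
  calc u * Psi (α + 1 + 1) u
    _ = ∑' n, α * (α + 1) *
        (psiCoeff (α + 1) (n + 1) * u ^ (n + 1) - psiCoeff α (n + 1) * u ^ (n + 1)) := by
      rw [Psi_eq_tsum_psiCoeff, ← tsum_mul_left]
      refine tsum_congr fun n => ?_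
      rw [← psiCoeff_add_one_succ_sub hα]
      ring
    _ = α * (α + 1) * (∑' n, psiCoeff (α + 1) (n + 1) * u ^ (n + 1)
        - ∑' n, psiCoeff α (n + 1) * u ^ (n + 1)) := by
      rw [tsum_mul_left, ((summable_nat_add_iff 1).2 hsum₁).tsum_sub
        ((summable_nat_add_iff 1).2 hsum)]
    _ = α * (α + 1) * (Psi (α + 1) u - Psi α u) := by
      rw [Psi_eq_tsum_psiCoeff, Psi_eq_tsum_psiCoeff, hsum.tsum_eq_zero_add,
        hsum₁.tsum_eq_zero_add]
      simp [psiCoeff, rising]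

end Psi

section PartialDerivative

variable {n : ℕ} {i : Fin n} {A B : (Fin n → ℝ) → ℂ} {x : Fin n → ℝ}

/-- The partial derivative `∂_i` of a function on `ℝⁿ`, with the junk value `0` where the function
is not differentiable. It serves for functions of `x` or of `y` alone. -/
noncomputable def partialDeriv (i : Fin n) (A : (Fin n → ℝ) → ℂ) : (Fin n → ℝ) → ℂ :=
  fun x => fderiv ℝ A x (Pi.single i 1)

theorem partialDeriv_add (hA : DifferentiableAt ℝ A x) (hB : DifferentiableAt ℝ B x) :
    partialDeriv i (fun x => A x + B x) x = partialDeriv i A x + partialDeriv i B x := by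
  rw [partialDeriv, fderiv_fun_add hA hB]
  rfl

theorem partialDeriv_mul (hA : DifferentiableAt ℝ A x) (hB : DifferentiableAt ℝ B x) :
    partialDeriv i (fun x => A x * B x) x =
      partialDeriv i A x * B x + A x * partialDeriv i B x := by
  simp only [partialDeriv, fderiv_fun_mul hA hB, add_apply, smul_apply, smul_eq_mul]
  ring

theorem partialDeriv_const_mul (c : ℂ) (hA : DifferentiableAt ℝ A x) :
    partialDeriv i (fun x => c * A x) x = c * partialDeriv i A x := by
  rw [partialDeriv, fderiv_const_mul hA]
  rfl

theorem partialDeriv_comp {F : ℂ → ℂ} {F' : ℂ} (hF : HasDerivAt F F' (A x))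
    (hA : DifferentiableAt ℝ A x) :
    partialDeriv i (fun x => F (A x)) x = F' * partialDeriv i A x := by
  have := (hF.hasFDerivAt.restrictScalars ℝ).comp x hA.hasFDerivAt
  rw [partialDeriv, HasFDerivAt.fderiv (f := fun x => F (A x)) this]
  simp [partialDeriv, mul_comm]

theorem partialDeriv_coord (i j : Fin n) (x : Fin n → ℝ) :
    partialDeriv i (fun x => (x j : ℂ)) x = if j = i then 1 else 0 := by
  let coord : (Fin n → ℝ) →L[ℝ] ℂ :=
    Complex.ofRealCLM.comp (ContinuousLinearMap.proj (φ := fun _ => ℝ) j)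
  calc partialDeriv i coord x
    _ = coord (Pi.single i 1) := by rw [partialDeriv, coord.fderiv]
    _ = if j = i then 1 else 0 := by
      simp only [coord, ContinuousLinearMap.comp_apply, ContinuousLinearMap.proj_apply,
        Complex.ofRealCLM_apply, Pi.single_apply]
      split_ifs <;> simp

theorem differentiableAt_partialDeriv (hA : ContDiffAt ℝ 2 A x) :
    DifferentiableAt ℝ (partialDeriv i A) x :=
  ((hA.fderiv_right (m := 1) (by norm_num)).differentiableAt one_ne_zero).clm_apply
    (differentiableAt_const _)

theorem contDiff_mvPolynomial_eval (h : MvPolynomial (Fin n) ℝ) {m : WithTop ℕ∞} :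
    ContDiff ℝ m fun x => ((MvPolynomial.eval x h : ℝ) : ℂ) :=
  Complex.ofRealCLM.contDiff.comp (contDiffOn_univ.1
    (AnalyticOnNhd.eval_mvPolynomial h).contDiffOn_of_completeSpace)

theorem partialDeriv_mvPolynomial_eval (h : MvPolynomial (Fin n) ℝ) (i : Fin n) (x : Fin n → ℝ) :
    partialDeriv i (fun x => ((MvPolynomial.eval x h : ℝ) : ℂ)) x =
      ((MvPolynomial.eval x (MvPolynomial.pderiv i h) : ℝ) : ℂ) := by
  have hdiff (g : MvPolynomial (Fin n) ℝ) :
      DifferentiableAt ℝ (fun x => ((MvPolynomial.eval x g : ℝ) : ℂ)) x :=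
    (contDiff_mvPolynomial_eval g).differentiable one_ne_zero x
  induction h using MvPolynomial.induction_on with
  | C c => simp [partialDeriv]
  | add f g hf hg =>
    simp only [map_add, Complex.ofReal_add]
    rw [partialDeriv_add (hdiff f) (hdiff g), hf, hg]
  | mul_X f m hf =>
    simp only [map_mul, MvPolynomial.eval_X, Complex.ofReal_mul]
    rw [partialDeriv_mul (hdiff f) (by fun_prop), hf, partialDeriv_coord]
    by_cases hmi : m = i
    · subst hmi
      simp [add_comm, mul_comm]
    · simp [hmi, mul_comm]

end PartialDerivative

section Rho

variable {n : ℕ} {i : Fin n} {x : Fin n → ℝ}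

/-- Half the squared Euclidean norm on `ℝⁿ`; `rhox` and `rhoy` are its two pullbacks. -/
noncomputable def rho (x : Fin n → ℝ) : ℝ := (∑ i, x i ^ 2) / 2

theorem rhox_eq_rho {p q : ℕ} (z : Pt p q) : rhox p q z = rho z.1 := rfl

theorem rhoy_eq_rho {p q : ℕ} (z : Pt p q) : rhoy p q z = rho z.2 := rfl

theorem rho_ne_zero (hx : x ≠ 0) : (rho x : ℂ) ≠ 0 := by
  obtain ⟨m, hm⟩ := Function.ne_iff.1 hx
  have : 0 < ∑ i, x i ^ 2 :=
    Finset.sum_pos' (fun _ _ => sq_nonneg _) ⟨m, Finset.mem_univ m, sq_pos_of_ne_zero hm⟩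
  exact Complex.ofReal_ne_zero.2 (half_pos this).ne'

theorem rho_eq_eval (x : Fin n → ℝ) :
    rho x = MvPolynomial.eval x (MvPolynomial.C (1 / 2) * ∑ i, MvPolynomial.X i ^ 2) := by
  simp [rho, div_eq_inv_mul]

theorem contDiff_rho {m : WithTop ℕ∞} : ContDiff ℝ m fun x : Fin n → ℝ => (rho x : ℂ) := by
  simp only [rho_eq_eval]
  exact contDiff_mvPolynomial_eval _

theorem differentiable_rho : Differentiable ℝ fun x : Fin n → ℝ => (rho x : ℂ) :=
  contDiff_rho.differentiable one_ne_zero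

theorem partialDeriv_rho (i : Fin n) (x : Fin n → ℝ) :
    partialDeriv i (fun x => (rho x : ℂ)) x = x i := by
  simp only [rho_eq_eval, partialDeriv_mvPolynomial_eval]
  simp [MvPolynomial.pderiv_X, Pi.single_apply]

theorem partialDeriv_rho_mul {A : (Fin n → ℝ) → ℂ} (hA : DifferentiableAt ℝ A x) :
    partialDeriv i (fun x => rho x * A x) x = x i * A x + rho x * partialDeriv i A x := by
  rw [partialDeriv_mul (differentiable_rho x) hA, partialDeriv_rho]

theorem contDiffAt_rho_zpow (hx : x ≠ 0) (a : ℤ) {m : WithTop ℕ∞} :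
    ContDiffAt ℝ m (fun x => (rho x : ℂ) ^ a) x :=
  (((analyticAt_id (𝕜 := ℂ)).zpow (rho_ne_zero hx)).contDiffAt.restrict_scalars ℝ).comp x
    contDiff_rho.contDiffAt

theorem partialDeriv_rho_zpow (hx : x ≠ 0) (a : ℤ) :
    partialDeriv i (fun x => (rho x : ℂ) ^ a) x = a * (rho x : ℂ) ^ (a - 1) * x i := by
  rw [partialDeriv_comp (hasDerivAt_zpow a _ (.inl (rho_ne_zero hx))) (differentiable_rho x),
    partialDeriv_rho]

variable {α : ℂ} {A : (Fin n → ℝ) → ℂ}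

theorem differentiableAt_Psi_rho_mul (hα : ∀ n : ℕ, α ≠ -n) (c : ℂ) :
    DifferentiableAt ℝ (fun x : Fin n → ℝ => Psi α (rho x * c)) x :=
  ((hasDerivAt_Psi hα _).differentiableAt.restrictScalars ℝ).comp x
    ((differentiable_rho x).mul_const c)

theorem partialDeriv_mul_Psi (hα : ∀ n : ℕ, α ≠ -n) (hA : DifferentiableAt ℝ A x) (c : ℂ) :
    partialDeriv i (fun x => A x * Psi α (rho x * c)) x =
      partialDeriv i A x * Psi α (rho x * c)
        - 1 / α * (x i * A x) * c * Psi (α + 1) (rho x * c) := by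
  have hPsi : partialDeriv i (fun x => Psi α (rho x * c)) x =
      -(1 / α) * Psi (α + 1) (rho x * c) * (c * x i) := by
    rw [partialDeriv_comp (hasDerivAt_Psi hα _) ((differentiable_rho x).mul_const c)]
    simp only [mul_comm _ c, partialDeriv_const_mul c (differentiable_rho x), partialDeriv_rho]
  rw [partialDeriv_mul hA (differentiableAt_Psi_rho_mul hα c), hPsi]
  ring

/-- The function `(x_i h)† = x_i h − (ρ / (κ − 1)) ∂_i h`, with `κ` a free parameter. When `h` is a
harmonic polynomial, homogeneous of degree `k`, and `κ = k + n / 2`, it is the harmonic component of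
`x_i h`. -/
noncomputable def dagger (κ : ℂ) (i : Fin n) (h : (Fin n → ℝ) → ℂ) : (Fin n → ℝ) → ℂ :=
  fun x => x i * h x - rho x / (κ - 1) * partialDeriv i h x

theorem coord_mul_eq_dagger_add (κ : ℂ) (i : Fin n) (h : (Fin n → ℝ) → ℂ) (x : Fin n → ℝ) :
    x i * h x = dagger κ i h x + rho x / (κ - 1) * partialDeriv i h x :=
  (sub_add_cancel _ _).symm

theorem partialDeriv_mul_rho_zpow {κ : ℂ} (hκ : κ ≠ 1) {h : (Fin n → ℝ) → ℂ} (hx : x ≠ 0)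
    (hh : DifferentiableAt ℝ h x) (a : ℤ) :
    partialDeriv i (fun x => h x * (rho x : ℂ) ^ a) x =
      (κ + a - 1) / (κ - 1) * (rho x : ℂ) ^ a * partialDeriv i h x
        + a * (rho x : ℂ) ^ (a - 1) * dagger κ i h x := by
  have hκ' : κ - 1 ≠ 0 := sub_ne_zero.2 hκ
  have hρ := rho_ne_zero hx
  rw [partialDeriv_mul hh ((contDiffAt_rho_zpow hx a).differentiableAt one_ne_zero),
    partialDeriv_rho_zpow hx, dagger, zpow_sub_one₀ hρ]
  field_simp
  ring

end Rho

section Separated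

variable {p q : ℕ} {i : Fin p} {j : Fin q} {z : Pt p q} {α : ℂ}
  {A : (Fin p → ℝ) → ℂ} {B : (Fin q → ℝ) → ℂ}

theorem psiF_eq_Psi_rho_mul (α : ℂ) (z : Pt p q) :
    psiF p q α z = Psi α (rho z.1 * rho z.2) := by
  rw [psiF, Complex.ofReal_mul, rhox_eq_rho, rhoy_eq_rho]

theorem pdx_eq_partialDeriv {f : Pt p q → ℂ} (hf : DifferentiableAt ℝ f z) :
    pdx p q i f z = partialDeriv i (fun x => f (x, z.2)) z.1 := by
  have := hf.hasFDerivAt.comp z.1 (hasFDerivAt_prodMk_left (𝕜 := ℝ) z.1 z.2)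
  rw [partialDeriv, HasFDerivAt.fderiv (f := fun x => f (x, z.2)) this]
  simp [pdx]

theorem pdy_eq_partialDeriv {f : Pt p q → ℂ} (hf : DifferentiableAt ℝ f z) :
    pdy p q j f z = partialDeriv j (fun y => f (z.1, y)) z.2 := by
  have := hf.hasFDerivAt.comp z.2 (hasFDerivAt_prodMk_right (𝕜 := ℝ) z.1 z.2)
  rw [partialDeriv, HasFDerivAt.fderiv (f := fun y => f (z.1, y)) this]
  simp [pdy]

/-- The function `(x, y) ↦ A(x) B(y) ψ_α(x, y)`. Sums of such functions with varying `α` are stable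
under all partial derivatives. -/
noncomputable def separated (α : ℂ) (A : (Fin p → ℝ) → ℂ) (B : (Fin q → ℝ) → ℂ) : Pt p q → ℂ :=
  fun z => A z.1 * B z.2 * psiF p q α z

theorem differentiableAt_separated (hα : ∀ n : ℕ, α ≠ -n) (hA : DifferentiableAt ℝ A z.1)
    (hB : DifferentiableAt ℝ B z.2) : DifferentiableAt ℝ (separated α A B) z := by
  have hA' : DifferentiableAt ℝ (fun w : Pt p q => A w.1) z := hA.comp z differentiableAt_fst
  have hB' : DifferentiableAt ℝ (fun w : Pt p q => B w.2) z := hB.comp z differentiableAt_snd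
  have hρ : DifferentiableAt ℝ (fun w : Pt p q => (rho w.1 * rho w.2 : ℂ)) z :=
    ((differentiable_rho z.1).comp z differentiableAt_fst).mul
      ((differentiable_rho z.2).comp z differentiableAt_snd)
  have hψ : DifferentiableAt ℝ (psiF p q α) z := by
    simp only [funext (psiF_eq_Psi_rho_mul α)]
    exact ((hasDerivAt_Psi hα _).differentiableAt.restrictScalars ℝ).comp z hρ
  exact (hA'.mul hB').mul hψ

theorem pdx_separated (hα : ∀ n : ℕ, α ≠ -n) (hA : DifferentiableAt ℝ A z.1)
    (hB : DifferentiableAt ℝ B z.2) :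
    pdx p q i (separated α A B) z =
      separated α (partialDeriv i A) B z
        - 1 / α * separated (α + 1) (fun x => x i * A x) (fun y => rho y * B y) z := by
  have slice (x : Fin p → ℝ) :
      separated α A B (x, z.2) = B z.2 * (A x * Psi α (rho x * rho z.2)) := by
    rw [separated, psiF_eq_Psi_rho_mul]
    ring
  rw [pdx_eq_partialDeriv (differentiableAt_separated hα hA hB)]
  simp only [slice]
  rw [partialDeriv_const_mul _ (hA.fun_mul (differentiableAt_Psi_rho_mul hα _)),
    partialDeriv_mul_Psi hα hA]
  simp only [separated, psiF_eq_Psi_rho_mul]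
  ring

theorem pdy_separated (hα : ∀ n : ℕ, α ≠ -n) (hA : DifferentiableAt ℝ A z.1)
    (hB : DifferentiableAt ℝ B z.2) :
    pdy p q j (separated α A B) z =
      separated α A (partialDeriv j B) z
        - 1 / α * separated (α + 1) (fun x => rho x * A x) (fun y => y j * B y) z := by
  have slice (y : Fin q → ℝ) :
      separated α A B (z.1, y) = A z.1 * (B y * Psi α (rho y * rho z.1)) := by
    rw [separated, psiF_eq_Psi_rho_mul, mul_comm (rho y : ℂ)]
    ring
  rw [pdy_eq_partialDeriv (differentiableAt_separated hα hA hB)]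
  simp only [slice]
  rw [partialDeriv_const_mul _ (hB.fun_mul (differentiableAt_Psi_rho_mul hα _)),
    partialDeriv_mul_Psi hα hB]
  simp only [separated, psiF_eq_Psi_rho_mul, mul_comm (rho z.2 : ℂ)]
  ring

theorem pdy_separated_eventuallyEq (hα : ∀ n : ℕ, α ≠ -n) (hA : ContDiffAt ℝ 1 A z.1)
    (hB : ContDiffAt ℝ 1 B z.2) :
    pdy p q j (separated α A B) =ᶠ[nhds z] fun w =>
      separated α A (partialDeriv j B) w
        - 1 / α * separated (α + 1) (fun x => rho x * A x) (fun y => y j * B y) w := by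
  filter_upwards [continuousAt_fst.eventually (hA.eventually (by simp)),
    continuousAt_snd.eventually (hB.eventually (by simp))] with w hAw hBw
  exact pdy_separated hα (hAw.differentiableAt one_ne_zero) (hBw.differentiableAt one_ne_zero)

theorem mul_psiF_add_two (hα : ∀ n : ℕ, α ≠ -n) (z : Pt p q) :
    rho z.1 * rho z.2 * psiF p q (α + 1 + 1) z =
      α * (α + 1) * (psiF p q (α + 1) z - psiF p q α z) := by
  simp only [psiF_eq_Psi_rho_mul]
  exact mul_Psi_add_two hα _

theorem mul_psiF_add_one (hα : ∀ n : ℕ, α ≠ -n) (hα1 : α ≠ 1) (z : Pt p q) :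
    rho z.1 * rho z.2 * psiF p q (α + 1) z =
      α * (α - 1) * (psiF p q α z - psiF p q (α - 1) z) := by
  simpa only [sub_add_cancel, mul_comm (α - 1) α] using
    mul_psiF_add_two (sub_one_ne_neg_natCast hα hα1) z

theorem pdx_pdy_separated (hα : ∀ n : ℕ, α ≠ -n) (hA : ContDiffAt ℝ 1 A z.1)
    (hB : ContDiffAt ℝ 2 B z.2) :
    pdx p q i (pdy p q j (separated α A B)) z =
      separated α (partialDeriv i A) (partialDeriv j B) z
        - 1 / α * separated (α + 1) (fun x => x i * A x) (fun y => rho y * partialDeriv j B y) z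
        - 1 / α * (separated (α + 1) (partialDeriv i fun x => rho x * A x) (fun y => y j * B y) z
          - 1 / (α + 1) * separated (α + 1 + 1) (fun x => x i * (rho x * A x))
            (fun y => rho y * (y j * B y)) z) := by
  have hα₁ := add_one_ne_neg_natCast hα
  have hA' : DifferentiableAt ℝ A z.1 := hA.differentiableAt one_ne_zero
  have hB' : DifferentiableAt ℝ (partialDeriv j B) z.2 := differentiableAt_partialDeriv hB
  have hρA : DifferentiableAt ℝ (fun x => rho x * A x) z.1 := (differentiable_rho z.1).mul hA'
  have hyB : DifferentiableAt ℝ (fun y => y j * B y) z.2 :=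
    DifferentiableAt.mul (by fun_prop) (hB.differentiableAt two_ne_zero)
  rw [← pdx_separated hα hA' hB', ← pdx_separated hα₁ hρA hyB, pdx,
    (pdy_separated_eventuallyEq hα hA (hB.of_le one_le_two)).fderiv_eq,
    fderiv_fun_sub (differentiableAt_separated hα hA' hB')
      ((differentiableAt_separated hα₁ hρA hyB).const_mul _),
    fderiv_const_mul (differentiableAt_separated hα₁ hρA hyB)]
  rfl

theorem pdx_pdy_add_coord_mul_separated (hα : ∀ n : ℕ, α ≠ -n) (hA : ContDiffAt ℝ 1 A z.1)
    (hB : ContDiffAt ℝ 2 B z.2) :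
    pdx p q i (pdy p q j (separated α A B)) z + z.1 i * z.2 j * separated α A B z =
      partialDeriv i A z.1 * partialDeriv j B z.2 * psiF p q α z
        - 1 / α * (rho z.1 * partialDeriv i A z.1 * (z.2 j * B z.2)
          + z.1 i * A z.1 * (rho z.2 * partialDeriv j B z.2)
          + (1 - α) * (z.1 i * A z.1) * (z.2 j * B z.2)) * psiF p q (α + 1) z := by
  have hα₀ : α ≠ 0 := by simpa using hα 0
  have hα₁ : α + 1 ≠ 0 := by simpa using add_one_ne_neg_natCast hα 0
  rw [pdx_pdy_separated hα hA hB]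
  simp only [separated, partialDeriv_rho_mul (hA.differentiableAt one_ne_zero)]
  field_simp
  linear_combination z.1 i * A z.1 * z.2 j * B z.2 * mul_psiF_add_two hα z

end Separated

theorem stmt_15_general {p q : ℕ} {h₁ : (Fin p → ℝ) → ℂ} {h₂ : (Fin q → ℝ) → ℂ}
    {κp κm : ℂ} (hκp : κp ≠ 1) (hκm : κm ≠ 1) (a b : ℤ)
    {α : ℂ} (hα : ∀ n : ℕ, α ≠ -n) (hα1 : α ≠ 1)
    {f : Pt p q → ℂ} (hf : f = fun z => h₁ z.1 * h₂ z.2 * (rhox p q z : ℂ) ^ a *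
      (rhoy p q z : ℂ) ^ b * psiF p q α z)
    (i : Fin p) (j : Fin q) {z : Pt p q} (hx : z.1 ≠ 0) (hy : z.2 ≠ 0)
    (hh₁ : ContDiffAt ℝ 1 h₁ z.1) (hh₂ : ContDiffAt ℝ 2 h₂ z.2) :
    pdx p q i (pdy p q j f) z + z.1 i * z.2 j * f z =
      partialDeriv i h₁ z.1 * partialDeriv j h₂ z.2 *
          (rhox p q z : ℂ) ^ a * (rhoy p q z : ℂ) ^ b *
          ((κp + a - α) * (κm + b - α) / ((κp - 1) * (κm - 1)) * psiF p q α z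
            + (α - 1) * (κp + κm + a + b - α - 1) / ((κp - 1) * (κm - 1)) * psiF p q (α - 1) z)
        + partialDeriv i h₁ z.1 * dagger κm j h₂ z.2 *
          (-((κp + a + b - α) / (α * (κp - 1))) *
              (rhox p q z : ℂ) ^ (a + 1) * (rhoy p q z : ℂ) ^ b * psiF p q (α + 1) z
            + b * (κp + a - 1) / (κp - 1) *
              (rhox p q z : ℂ) ^ a * (rhoy p q z : ℂ) ^ (b - 1) * psiF p q α z)
        + dagger κp i h₁ z.1 * partialDeriv j h₂ z.2 *
          (-((κm + a + b - α) / (α * (κm - 1))) *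
              (rhox p q z : ℂ) ^ a * (rhoy p q z : ℂ) ^ (b + 1) * psiF p q (α + 1) z
            + a * (κm + b - 1) / (κm - 1) *
              (rhox p q z : ℂ) ^ (a - 1) * (rhoy p q z : ℂ) ^ b * psiF p q α z)
        + dagger κp i h₁ z.1 * dagger κm j h₂ z.2 *
          (-((a + b + 1 - α) / α) *
              (rhox p q z : ℂ) ^ a * (rhoy p q z : ℂ) ^ b * psiF p q (α + 1) z
            + a * b *
              (rhox p q z : ℂ) ^ (a - 1) * (rhoy p q z : ℂ) ^ (b - 1) * psiF p q α z) := by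
  have hα₀ : α ≠ 0 := by simpa using hα 0
  have hκp' : κp - 1 ≠ 0 := sub_ne_zero.2 hκp
  have hκm' : κm - 1 ≠ 0 := sub_ne_zero.2 hκm
  have hρx : (rho z.1 : ℂ) ≠ 0 := rho_ne_zero hx
  have hρy : (rho z.2 : ℂ) ≠ 0 := rho_ne_zero hy
  have hf_separated :
      f = separated α (fun x => h₁ x * (rho x : ℂ) ^ a) (fun y => h₂ y * (rho y : ℂ) ^ b) := by
    funext w
    simp only [hf, separated, rhox_eq_rho, rhoy_eq_rho]
    ring
  rw [hf_separated, pdx_pdy_add_coord_mul_separated hα (hh₁.mul (contDiffAt_rho_zpow hx a))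
      (hh₂.mul (contDiffAt_rho_zpow hy b)),
    partialDeriv_mul_rho_zpow hκp hx (hh₁.differentiableAt one_ne_zero),
    partialDeriv_mul_rho_zpow hκm hy (hh₂.differentiableAt two_ne_zero),
    ← mul_assoc (z.1 i : ℂ), ← mul_assoc (z.2 j : ℂ), coord_mul_eq_dagger_add κp i h₁,
    coord_mul_eq_dagger_add κm j h₂, rhox_eq_rho, rhoy_eq_rho]
  simp only [zpow_add_one₀ hρx, zpow_add_one₀ hρy, zpow_sub_one₀ hρx, zpow_sub_one₀ hρy]
  field_simp
  linear_combination
    -(rho z.1 * rho z.2 * partialDeriv i h₁ z.1 * partialDeriv j h₂ z.2 *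
      (κp + κm + a + b - 1 - α)) * mul_psiF_add_one hα hα1 z

theorem stmt_15 (p q k l : ℕ) (hp : 1 ≤ p) (hq : 1 ≤ q)
    (h₁ : MvPolynomial (Fin p) ℝ) (h₂ : MvPolynomial (Fin q) ℝ)
    (hhom₁ : h₁.IsHomogeneous k) (hhom₂ : h₂.IsHomogeneous l)
    (hharm₁ : ∑ i : Fin p, MvPolynomial.pderiv i (MvPolynomial.pderiv i h₁) = 0)
    (hharm₂ : ∑ j : Fin q, MvPolynomial.pderiv j (MvPolynomial.pderiv j h₂) = 0)
    (κp κm : ℂ) (hκp : κp = (k : ℂ) + (p : ℂ) / 2) (hκm : κm = (l : ℂ) + (q : ℂ) / 2)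
    (hκp1 : κp ≠ 1) (hκm1 : κm ≠ 1)
    (a b : ℕ) (α : ℂ) (hα : ∀ n : ℕ, α ≠ -(n : ℂ)) (hα1 : α ≠ 1)
    (E₁ E₂ : Pt p q → ℂ)
    (hE₁ : E₁ = fun z => ((MvPolynomial.eval z.1 h₁ : ℝ) : ℂ))
    (hE₂ : E₂ = fun z => ((MvPolynomial.eval z.2 h₂ : ℝ) : ℂ))
    (D₁ : Fin p → Pt p q → ℂ) (D₂ : Fin q → Pt p q → ℂ)
    (hD₁ : D₁ = fun i z => ((MvPolynomial.eval z.1 (MvPolynomial.pderiv i h₁) : ℝ) : ℂ))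
    (hD₂ : D₂ = fun j z => ((MvPolynomial.eval z.2 (MvPolynomial.pderiv j h₂) : ℝ) : ℂ))
    (Dag₁ : Fin p → Pt p q → ℂ) (Dag₂ : Fin q → Pt p q → ℂ)
    (hDag₁ : Dag₁ = fun i z =>
      ((z.1 i : ℝ) : ℂ) * E₁ z - (((rhox p q z : ℝ) : ℂ) / (κp - 1)) * D₁ i z)
    (hDag₂ : Dag₂ = fun j z =>
      ((z.2 j : ℝ) : ℂ) * E₂ z - (((rhoy p q z : ℝ) : ℂ) / (κm - 1)) * D₂ j z)
    (f : Pt p q → ℂ)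
    (hf : f = fun z => E₁ z * E₂ z * ((rhox p q z : ℝ) : ℂ) ^ (a : ℤ) *
      ((rhoy p q z : ℝ) : ℂ) ^ (b : ℤ) * psiF p q α z) :
    ∀ (i : Fin p) (j : Fin q) (z : Pt p q), z.1 ≠ 0 → z.2 ≠ 0 →
      pdx p q i (pdy p q j f) z + ((z.1 i : ℝ) : ℂ) * ((z.2 j : ℝ) : ℂ) * f z =
        D₁ i z * D₂ j z * ((rhox p q z : ℝ) : ℂ) ^ (a : ℤ) * ((rhoy p q z : ℝ) : ℂ) ^ (b : ℤ) *
          (((κp + (a : ℂ) - α) * (κm + (b : ℂ) - α) / ((κp - 1) * (κm - 1))) * psiF p q α z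
            + ((α - 1) * (κp + κm + (a : ℂ) + (b : ℂ) - α - 1) / ((κp - 1) * (κm - 1))) *
              psiF p q (α - 1) z)
        + D₁ i z * Dag₂ j z *
          (-((κp + (a : ℂ) + (b : ℂ) - α) / (α * (κp - 1))) *
              ((rhox p q z : ℝ) : ℂ) ^ ((a : ℤ) + 1) * ((rhoy p q z : ℝ) : ℂ) ^ (b : ℤ) *
              psiF p q (α + 1) z
            + ((b : ℂ) * (κp + (a : ℂ) - 1) / (κp - 1)) *
              ((rhox p q z : ℝ) : ℂ) ^ (a : ℤ) * ((rhoy p q z : ℝ) : ℂ) ^ ((b : ℤ) - 1) *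
              psiF p q α z)
        + Dag₁ i z * D₂ j z *
          (-((κm + (a : ℂ) + (b : ℂ) - α) / (α * (κm - 1))) *
              ((rhox p q z : ℝ) : ℂ) ^ (a : ℤ) * ((rhoy p q z : ℝ) : ℂ) ^ ((b : ℤ) + 1) *
              psiF p q (α + 1) z
            + ((a : ℂ) * (κm + (b : ℂ) - 1) / (κm - 1)) *
              ((rhox p q z : ℝ) : ℂ) ^ ((a : ℤ) - 1) * ((rhoy p q z : ℝ) : ℂ) ^ (b : ℤ) *
              psiF p q α z)
        + Dag₁ i z * Dag₂ j z *
          (-(((a : ℂ) + (b : ℂ) + 1 - α) / α) *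
              ((rhox p q z : ℝ) : ℂ) ^ (a : ℤ) * ((rhoy p q z : ℝ) : ℂ) ^ (b : ℤ) *
              psiF p q (α + 1) z
            + (a : ℂ) * (b : ℂ) *
              ((rhox p q z : ℝ) : ℂ) ^ ((a : ℤ) - 1) * ((rhoy p q z : ℝ) : ℂ) ^ ((b : ℤ) - 1) *
              psiF p q α z) := by
  intro i j z hx hy
  subst hE₁ hE₂ hD₁ hD₂ hDag₁ hDag₂
  have general := stmt_15_general (h₁ := fun x => (MvPolynomial.eval x h₁ : ℝ))
    (h₂ := fun y => (MvPolynomial.eval y h₂ : ℝ)) hκp1 hκm1 a b hα hα1 hf i j hx hy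
    (contDiff_mvPolynomial_eval h₁).contDiffAt (contDiff_mvPolynomial_eval h₂).contDiffAt
  simp only [partialDeriv_mvPolynomial_eval, dagger, Int.cast_natCast] at general
  exact general
end

section
/- Let p ≥ q ≥ 3 be integers with p ≡ q (mod 2) and let m ∈ ℕ. Then there exists a polynomial P with rational coefficients of degree exactly p+q−4 and leading coefficient 4(m+1)/((p−2)!·(q−2)!) such that for every n ∈ ℕ, P(n) = Σ_{j=0}^{m} ( 4·(n+j+p/2−1)·(n+m−j+p/2−1) / ((p−2)!·(q−2)!) ) · (n+j+1)_{p−3} · (n+m−j+(p−q)/2+1)_{q−3}, where (β)_k = β(β+1)⋯(β+k−1) is the rising factorial. (This sum is Σ_{j=0}^m dim ℋ^{n+j}(ℝ^p)·dim ℋ^{n+m−j+(p−q)/2}(ℝ^q), the dimension of the n-th graded piece used to compute the Gelfand–Kirillov dimension p+q−3 and Bernstein degree 4(m+1)(p+q−4)!/((p−2)!(q−2)!) of the module M_m^±.) -/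
/-- Rising factorial `(β)ₖ = β(β+1)⋯(β+k−1)` for a rational number `β`. -/
noncomputable def risingQ (β : ℚ) : ℕ → ℚ
  | 0 => 1
  | n + 1 => risingQ β n * (β + n)

/-!
Since `p / 2 = (p - q) / 2 + q / 2`, the `j`-th summand is
`H_p(n + j) * H_q(n + m - j + (p - q) / 2)`, where `H_k(d) = dim ℋ^d(ℝ^k)` is a polynomial in `d`
of degree `k - 2` with leading coefficient `2 / (k - 2)!`. Translating the variable
changes neither degree nor leading coefficient, so the `m + 1` summands are polynomials in `n` of
degree `(p - 2) + (q - 2)` with the same leading coefficient `4 / ((p - 2)! (q - 2)!)`, and these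
cannot cancel in characteristic zero.
-/

open Polynomial

section SumOfEqualDegree

variable {ι R : Type*} [Semiring R] {s : Finset ι} {f : ι → R[X]} {d : ℕ}

theorem coeff_sum_eq_sum_leadingCoeff (hd : ∀ i ∈ s, (f i).natDegree = d) :
    (∑ i ∈ s, f i).coeff d = ∑ i ∈ s, (f i).leadingCoeff := by
  rw [finsetSum_coeff]
  exact Finset.sum_congr rfl fun i hi => by rw [leadingCoeff, hd i hi]

theorem natDegree_sum_of_sum_leadingCoeff_ne_zero (hd : ∀ i ∈ s, (f i).natDegree = d)
    (hne : ∑ i ∈ s, (f i).leadingCoeff ≠ 0) : (∑ i ∈ s, f i).natDegree = d :=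
  natDegree_eq_of_le_of_coeff_ne_zero
    (natDegree_sum_le_of_forall_le _ _ fun i hi => (hd i hi).le)
    (by rwa [coeff_sum_eq_sum_leadingCoeff hd])

end SumOfEqualDegree

section SumOfTranslates

variable {ι R : Type*} [Semiring R] [NoZeroDivisors R]

theorem leadingCoeff_taylor_mul_taylor (f g : R[X]) (r t : R) :
    (taylor r f * taylor t g).leadingCoeff = f.leadingCoeff * g.leadingCoeff := by
  rw [leadingCoeff_mul, leadingCoeff_taylor, leadingCoeff_taylor]

theorem natDegree_taylor_mul_taylor {f g : R[X]} (hf : f ≠ 0) (hg : g ≠ 0) (r t : R) :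
    (taylor r f * taylor t g).natDegree = f.natDegree + g.natDegree := by
  rw [natDegree_mul (by rwa [Ne, taylor_eq_zero]) (by rwa [Ne, taylor_eq_zero]),
    natDegree_taylor, natDegree_taylor]

variable [CharZero R] (a b : ι → R)

theorem natDegree_sum_taylor_mul_taylor {f g : R[X]} (hf : f ≠ 0) (hg : g ≠ 0) {s : Finset ι}
    (hs : s.Nonempty) :
    (∑ i ∈ s, taylor (a i) f * taylor (b i) g).natDegree = f.natDegree + g.natDegree := by
  refine natDegree_sum_of_sum_leadingCoeff_ne_zero
    (fun i _ => natDegree_taylor_mul_taylor hf hg (a i) (b i)) ?_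
  simp only [leadingCoeff_taylor_mul_taylor, Finset.sum_const, nsmul_eq_mul]
  simp [hf, hg, hs.ne_empty]

theorem leadingCoeff_sum_taylor_mul_taylor (f g : R[X]) (s : Finset ι) :
    (∑ i ∈ s, taylor (a i) f * taylor (b i) g).leadingCoeff =
      s.card * (f.leadingCoeff * g.leadingCoeff) := by
  rcases eq_or_ne f 0 with rfl | hf
  · simp
  rcases eq_or_ne g 0 with rfl | hg
  · simp
  rcases s.eq_empty_or_nonempty with rfl | hs
  · simp
  rw [leadingCoeff, natDegree_sum_taylor_mul_taylor a b hf hg hs,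
    coeff_sum_eq_sum_leadingCoeff fun i _ => natDegree_taylor_mul_taylor hf hg (a i) (b i)]
  simp only [leadingCoeff_taylor_mul_taylor, Finset.sum_const, nsmul_eq_mul]

end SumOfTranslates

theorem eval_ascPochhammer_eq_risingQ (β : ℚ) (k : ℕ) :
    (ascPochhammer ℚ k).eval β = risingQ β k := by
  induction k with
  | zero => simp [risingQ]
  | succ k ih => rw [ascPochhammer_succ_eval, ih, risingQ]

/-- The polynomial `H_k` with `H_k(d) = dim ℋ^d(ℝ^k)`, the dimension of the space of homogeneous
harmonic polynomials of degree `d` on `ℝ^k`. The subtractions `k - 2` and `k - 3` are truncated, so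
it has this meaning only for `3 ≤ k`. -/
noncomputable def harmonicDimPoly (k : ℕ) : ℚ[X] :=
  C (2 / ((k - 2).factorial : ℚ)) * ((X + C ((k : ℚ) / 2 - 1)) * taylor 1 (ascPochhammer ℚ (k - 3)))

theorem eval_harmonicDimPoly (k : ℕ) (d : ℚ) :
    (harmonicDimPoly k).eval d =
      2 * (d + (k : ℚ) / 2 - 1) / ((k - 2).factorial : ℚ) * risingQ (d + 1) (k - 3) := by
  simp only [harmonicDimPoly, eval_mul, eval_add, eval_C, eval_X, taylor_eval,
    eval_ascPochhammer_eq_risingQ]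
  ring

theorem leadingCoeff_harmonicDimPoly (k : ℕ) :
    (harmonicDimPoly k).leadingCoeff = 2 / ((k - 2).factorial : ℚ) := by
  rw [harmonicDimPoly, leadingCoeff_mul, leadingCoeff_mul, leadingCoeff_C, leadingCoeff_X_add_C,
    leadingCoeff_taylor, (monic_ascPochhammer ℚ (k - 3)).leadingCoeff, one_mul, mul_one]

theorem harmonicDimPoly_ne_zero (k : ℕ) : harmonicDimPoly k ≠ 0 := by
  rw [← leadingCoeff_ne_zero, leadingCoeff_harmonicDimPoly]
  positivity

theorem natDegree_harmonicDimPoly {k : ℕ} (hk : 3 ≤ k) :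
    (harmonicDimPoly k).natDegree = k - 2 := by
  have taylor_ne_zero : taylor 1 (ascPochhammer ℚ (k - 3)) ≠ 0 := by
    rw [Ne, taylor_eq_zero]
    exact (monic_ascPochhammer ℚ (k - 3)).ne_zero
  rw [harmonicDimPoly, natDegree_C_mul (by positivity),
    natDegree_mul (X_add_C_ne_zero _) taylor_ne_zero, natDegree_X_add_C, natDegree_taylor,
    ascPochhammer_natDegree]
  lia

theorem stmt_18_general {p q : ℕ} (m : ℕ) (hp : 3 ≤ p) (hq : 3 ≤ q) :
    ∃ P : ℚ[X],
      P.natDegree = p + q - 4 ∧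
      P.leadingCoeff = 4 * (m + 1) / (((p - 2).factorial : ℚ) * ((q - 2).factorial : ℚ)) ∧
      ∀ x : ℚ, P.eval x =
        ∑ j ∈ Finset.range (m + 1),
          (4 * (x + j + (p : ℚ) / 2 - 1) * (x + m - j + (p : ℚ) / 2 - 1) /
              (((p - 2).factorial : ℚ) * ((q - 2).factorial : ℚ))) *
            risingQ (x + j + 1) (p - 3) *
            risingQ (x + m - j + ((p : ℚ) - q) / 2 + 1) (q - 3) := by
  refine ⟨∑ j ∈ Finset.range (m + 1), taylor (j : ℚ) (harmonicDimPoly p) *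
    taylor (m - j + ((p : ℚ) - q) / 2) (harmonicDimPoly q), ?_, ?_, fun x => ?_⟩
  · rw [natDegree_sum_taylor_mul_taylor _ _ (harmonicDimPoly_ne_zero p) (harmonicDimPoly_ne_zero q)
      Finset.nonempty_range_add_one, natDegree_harmonicDimPoly hp, natDegree_harmonicDimPoly hq]
    lia
  · rw [leadingCoeff_sum_taylor_mul_taylor, leadingCoeff_harmonicDimPoly,
      leadingCoeff_harmonicDimPoly, Finset.card_range]
    push_cast
    ring
  · rw [eval_finsetSum]
    refine Finset.sum_congr rfl fun j _ => ?_
    have hshift : x + (m - j + ((p : ℚ) - q) / 2) = x + m - j + ((p : ℚ) - q) / 2 := by ring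
    rw [eval_mul, taylor_eval, taylor_eval, hshift, eval_harmonicDimPoly, eval_harmonicDimPoly]
    ring

theorem stmt_18 (p q m : ℕ) (hq3 : 3 ≤ q) (hqp : q ≤ p) (hpar : p % 2 = q % 2) :
    ∃ P : Polynomial ℚ,
      P.natDegree = p + q - 4 ∧
      P.leadingCoeff = 4 * (m + 1) / (((p - 2).factorial : ℚ) * ((q - 2).factorial : ℚ)) ∧
      ∀ n : ℕ, P.eval (n : ℚ) =
        ∑ j ∈ Finset.range (m + 1),
          (4 * ((n : ℚ) + j + (p : ℚ) / 2 - 1) * ((n : ℚ) + m - j + (p : ℚ) / 2 - 1) /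
              (((p - 2).factorial : ℚ) * ((q - 2).factorial : ℚ))) *
            risingQ ((n : ℚ) + j + 1) (p - 3) *
            risingQ ((n : ℚ) + m - j + ((p : ℚ) - q) / 2 + 1) (q - 3) := by
  obtain ⟨P, hdeg, hlead, heval⟩ := stmt_18_general m (hq3.trans hqp) hq3
  exact ⟨P, hdeg, hlead, fun n => heval n⟩
end
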